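/- arXiv:1502.05030 — 5 statements merged into one kernel-verified Lean document; each statement's English description precedes it below -/
import Mathlib

section
/- Let n ≥ 2 and let X ⊆ [-1,1]. Let V be a finite subset of the unit sphere S^{n-1} in ℝ^n, and let H = (V,E) be the graph on vertex set V in which two points ξ, η ∈ V are joined by an edge if and only if ⟨ξ,η⟩ ∈ X. Then for every Lebesgue measurable X-avoiding set I ⊆ S^{n-1}, the normalized surface measure of I satisfies λ(I) ≤ α(H)/|V|, where α(H) is the independence number of H. -/
open MeasureTheory Metric Matrix Filter
open scoped RealInnerProductSpace ENNReal

noncomputable section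

/-- `ℝ^n` as a Euclidean space. -/
abbrev Eucl (n : ℕ) : Type := EuclideanSpace ℝ (Fin n)

/-- The unit sphere `S^{n-1}` in `ℝ^n`. -/
abbrev Sph (n : ℕ) := Metric.sphere (0 : Eucl n) 1

/-- The Lebesgue surface measure on the unit sphere `S^{n-1}`, normalised so that the
total measure of the sphere is `1`. -/
def sphMeasure (n : ℕ) : Measure (Sph n) :=
  (((volume : Measure (Eucl n)).toSphere) Set.univ)⁻¹ • (volume : Measure (Eucl n)).toSphere

/-- A subset `I` of the sphere is `X`-avoiding if `⟪ξ, η⟫ ∉ X` for all `ξ, η ∈ I`. -/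
def Avoids {n : ℕ} (X : Set ℝ) (I : Set (Sph n)) : Prop :=
  ∀ ξ ∈ I, ∀ η ∈ I, ⟪(ξ : Eucl n), (η : Eucl n)⟫ ∉ X

/-- The orthogonal group, as unitary operators. -/
abbrev OG (n : ℕ) := unitary (Eucl n →L[ℝ] Eucl n)

theorem OG_norm {n : ℕ} (g : OG n) (x : Eucl n) : ‖(g : Eucl n →L[ℝ] Eucl n) x‖ = ‖x‖ :=
  (Unitary.linearIsometryEquiv g).norm_map x

/-- The action on the sphere. -/
def act {n : ℕ} (g : OG n) (ξ : Sph n) : Sph n :=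
  ⟨(g : Eucl n →L[ℝ] Eucl n) ξ, by
    have := ξ.2
    simp only [mem_sphere_zero_iff_norm] at this ⊢
    rw [OG_norm, this]⟩

theorem act_mul {n : ℕ} (g h : OG n) (ξ : Sph n) : act (g * h) ξ = act g (act h ξ) := rfl

theorem act_one {n : ℕ} (ξ : Sph n) : act (1 : OG n) ξ = ξ := rfl

theorem act_inner {n : ℕ} (g : OG n) (ξ η : Sph n) :
    ⟪(act g ξ : Eucl n), (act g η : Eucl n)⟫ = ⟪(ξ : Eucl n), (η : Eucl n)⟫ :=
  (Unitary.linearIsometryEquiv g).inner_map_map ξ η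

theorem act_continuous {n : ℕ} : Continuous (fun p : OG n × Sph n => act p.1 p.2) := by
  unfold act
  refine Continuous.subtype_mk ?_ _
  exact (continuous_subtype_val.comp continuous_fst).clm_apply
    (continuous_subtype_val.comp continuous_snd)

theorem act_trans {n : ℕ} (ξ η : Sph n) : ∃ g : OG n, act g ξ = η := by
  refine ⟨Unitary.linearIsometryEquiv.symm
    (Submodule.reflection (ℝ ∙ ((ξ : Eucl n) - η))ᗮ), ?_⟩
  apply Subtype.ext
  have h : ‖(ξ : Eucl n)‖ = ‖(η : Eucl n)‖ := by simp
  exact Submodule.reflection_sub h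

instance OG_star (n : ℕ) : ContinuousStar (Eucl n →L[ℝ] Eucl n) :=
  ⟨(ContinuousLinearMap.adjoint (𝕜 := ℝ) (E := Eucl n) (F := Eucl n)).continuous⟩

instance OG_compact (n : ℕ) : CompactSpace (OG n) := by
  have : ProperSpace (Eucl n →L[ℝ] Eucl n) := FiniteDimensional.proper ℝ _
  refine isCompact_iff_compactSpace.mp (Metric.isCompact_of_isClosed_isBounded
    isClosed_unitary ?_)
  refine (Metric.isBounded_closedBall (x := (0 : Eucl n →L[ℝ] Eucl n)) (r := 1)).subset ?_
  intro g hg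
  rw [mem_closedBall_zero_iff]
  refine ContinuousLinearMap.opNorm_le_bound _ zero_le_one fun x => ?_
  rw [one_mul]
  exact (OG_norm ⟨g, hg⟩ x).le

instance OG_sc (n : ℕ) : SecondCountableTopology (OG n) := by
  have : ProperSpace (Eucl n →L[ℝ] Eucl n) := FiniteDimensional.proper ℝ _
  infer_instance

instance OG_meas (n : ℕ) : MeasurableSpace (OG n) := borel _

instance OG_borel (n : ℕ) : BorelSpace (OG n) := ⟨rfl⟩

open scoped Pointwise in
theorem toSphere_act {n : ℕ} (g : OG n) (I : Set (Sph n)) (hI : MeasurableSet I) :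
    (volume : Measure (Eucl n)).toSphere (act g ⁻¹' I) =
      (volume : Measure (Eucl n)).toSphere I := by
  have hc : Continuous (act g) := act_continuous.comp (Continuous.prodMk_right g)
  rw [Measure.toSphere_apply' _ hI, Measure.toSphere_apply' _ (hc.measurable hI)]
  congr 1
  have key : (Set.Ioo (0 : ℝ) 1 • (Subtype.val '' (act g ⁻¹' I)) : Set (Eucl n)) =
      (Unitary.linearIsometryEquiv g) ⁻¹' (Set.Ioo (0 : ℝ) 1 • (Subtype.val '' I)) := by
    ext x
    simp only [Set.mem_preimage, Set.mem_smul, Set.mem_image]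
    constructor
    · rintro ⟨r, hr, _, ⟨ξ, hξ, rfl⟩, rfl⟩
      exact ⟨r, hr, _, ⟨_, hξ, rfl⟩, (map_smul (Unitary.linearIsometryEquiv g) r (ξ : Eucl n)).symm⟩
    · rintro ⟨r, hr, _, ⟨ξ, hξ, rfl⟩, hx⟩
      refine ⟨r, hr, _, ⟨act g⁻¹ ξ, ?_, rfl⟩, ?_⟩
      · show act g (act g⁻¹ ξ) ∈ I
        rw [← act_mul, mul_inv_cancel, act_one]
        exact hξ
      · apply (Unitary.linearIsometryEquiv g).injective
        rw [← hx, map_smul]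
        congr 1
        show ((act g (act g⁻¹ ξ) : Sph n) : Eucl n) = ξ
        rw [← act_mul, mul_inv_cancel, act_one]
  rw [key]
  exact (Unitary.linearIsometryEquiv g).measurePreserving.measure_preimage_equiv
    (f := (Unitary.linearIsometryEquiv g).toMeasurableEquiv) _

theorem sphMeasure_act {n : ℕ} (g : OG n) (I : Set (Sph n)) (hI : MeasurableSet I) :
    sphMeasure n (act g ⁻¹' I) = sphMeasure n I := by
  simp only [sphMeasure, Measure.smul_apply, toSphere_act g I hI]

theorem sphMeasure_prob {n : ℕ} (hn : 2 ≤ n) : IsProbabilityMeasure (sphMeasure n) := by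
  have : Nonempty (Fin n) := ⟨⟨0, by omega⟩⟩
  constructor
  rw [sphMeasure, Measure.smul_apply, smul_eq_mul]
  refine ENNReal.inv_mul_cancel ?_ (measure_ne_top _ _)
  rw [Ne, Measure.measure_univ_eq_zero]
  exact Measure.toSphere_ne_zero _

theorem orbit_measure {n : ℕ} (hn : 2 ≤ n) (μ : Measure (OG n)) [IsProbabilityMeasure μ]
    [μ.IsMulLeftInvariant] (I : Set (Sph n)) (hI : MeasurableSet I) (ξ : Sph n) :
    μ {g | act g⁻¹ ξ ∈ I} = sphMeasure n I := by
  have := sphMeasure_prob hn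
  have hconst : ∀ η, μ {g | act g⁻¹ η ∈ I} = μ {g | act g⁻¹ ξ ∈ I} := by
    intro η
    obtain ⟨h, rfl⟩ := act_trans ξ η
    rw [← measure_preimage_mul μ h⁻¹ {g | act g⁻¹ ξ ∈ I}]
    congr 1
    ext g
    simp [act_mul]
  have hmeas : MeasurableSet {p : OG n × Sph n | act p.1⁻¹ p.2 ∈ I} := by
    have hc : Continuous (fun p : OG n × Sph n => act p.1⁻¹ p.2) :=
      act_continuous.comp (continuous_fst.inv.prodMk continuous_snd)
    exact hc.measurable hI
  have h1 := Measure.prod_apply (μ := μ) (ν := sphMeasure n) hmeas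
  have h2 := Measure.prod_apply_symm (μ := μ) (ν := sphMeasure n) hmeas
  rw [h1] at h2
  have e1 : ∀ g : OG n, sphMeasure n (Prod.mk g ⁻¹' {p : OG n × Sph n | act p.1⁻¹ p.2 ∈ I}) =
      sphMeasure n I := fun g => sphMeasure_act g⁻¹ I hI
  have e2 : ∀ η : Sph n, μ ((fun g => (g, η)) ⁻¹' {p : OG n × Sph n | act p.1⁻¹ p.2 ∈ I}) =
      μ {g | act g⁻¹ ξ ∈ I} := hconst
  simp only [e1, e2, lintegral_const, measure_univ, mul_one] at h2
  exact h2.symm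

/-- **Proposition (combinatorial upper bound).** Let `n ≥ 2` and `X ⊆ [-1,1]`. For a finite
subset `V` of the sphere, consider the graph `H` on `V` joining `ξ ≠ η` when `⟪ξ, η⟫ ∈ X`.
Then every measurable `X`-avoiding set `I` satisfies `λ(I) ≤ α(H) / |V|`, where `α(H)`,
the independence number of `H`, is the largest cardinality of a subset of `V` containing
no two adjacent vertices. -/
theorem combinatorial_upper_bound {n : ℕ} (hn : 2 ≤ n) (X : Set ℝ)
    (hX : X ⊆ Set.Icc (-1 : ℝ) 1) (V : Finset (Sph n)) (hV : V.Nonempty)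
    (I : Set (Sph n)) (hI : MeasurableSet I) (hIav : Avoids X I) :
    sphMeasure n I ≤
      ((sSup {k : ℕ | ∃ S : Finset (Sph n), S ⊆ V ∧
          (∀ ξ ∈ S, ∀ η ∈ S, ξ ≠ η → ⟪(ξ : Eucl n), (η : Eucl n)⟫ ∉ X) ∧ S.card = k} :
        ℕ) : ℝ≥0∞) / (V.card : ℝ≥0∞) := by
  classical
  set T : Set ℕ := {k : ℕ | ∃ S : Finset (Sph n), S ⊆ V ∧
          (∀ ξ ∈ S, ∀ η ∈ S, ξ ≠ η → ⟪(ξ : Eucl n), (η : Eucl n)⟫ ∉ X) ∧ S.card = k} with hT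
  have hbdd : BddAbove T := by
    refine ⟨V.card, ?_⟩
    rintro k ⟨S, hS, -, rfl⟩
    exact Finset.card_le_card hS
  let K : TopologicalSpace.PositiveCompacts (OG n) := ⊤
  let μ : Measure (OG n) := Measure.haarMeasure K
  have hμ : IsProbabilityMeasure μ := ⟨Measure.haarMeasure_self (K₀ := K)⟩
  have hset : ∀ ξ : Sph n, MeasurableSet {g : OG n | act g⁻¹ ξ ∈ I} := by
    intro ξ
    have hc : Continuous (fun g : OG n => act g⁻¹ ξ) :=
      act_continuous.comp (continuous_inv.prodMk continuous_const)
    exact hc.measurable hI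
  rw [ENNReal.le_div_iff_mul_le (Or.inl (by simpa using hV.ne_empty))
    (Or.inl (ENNReal.natCast_ne_top _)), mul_comm]
  calc (V.card : ℝ≥0∞) * sphMeasure n I
      = ∑ ξ ∈ V, μ {g | act g⁻¹ ξ ∈ I} := by
        rw [Finset.sum_congr rfl (fun ξ _ => orbit_measure hn μ I hI ξ)]
        simp
    _ = ∑ ξ ∈ V, ∫⁻ g, {g | act g⁻¹ ξ ∈ I}.indicator 1 g ∂μ := by
        refine Finset.sum_congr rfl fun ξ _ => ?_
        rw [lintegral_indicator_one (hset ξ)]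
    _ = ∫⁻ g, ∑ ξ ∈ V, {g | act g⁻¹ ξ ∈ I}.indicator 1 g ∂μ := by
        rw [lintegral_finsetSum]
        exact fun ξ _ => measurable_one.indicator (hset ξ)
    _ ≤ ∫⁻ _, ((sSup T : ℕ) : ℝ≥0∞) ∂μ := by
        refine lintegral_mono fun g => ?_
        have hmem : (V.filter fun ξ => act g⁻¹ ξ ∈ I).card ∈ T := by
          refine ⟨_, Finset.filter_subset _ _, ?_, rfl⟩
          intro ξ hξ η hη _
          rw [← act_inner g⁻¹]
          exact hIav _ (Finset.mem_filter.mp hξ).2 _ (Finset.mem_filter.mp hη).2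
        have := le_csSup hbdd hmem
        refine le_trans (le_of_eq ?_) (Nat.cast_le.mpr this)
        simp [Set.indicator_apply]
    _ = _ := by simp
end
end

section
/- Let x ∈ [-1,1], X = {x}, and suppose t = arccos(x)/(2π) is rational, say t = p/q with p, q coprime nonnegative integers and q even. Then the supremum of λ(I) over all Lebesgue measurable X-avoiding subsets I of the unit circle S^1 equals 1/2, and this supremum is attained: there exists a measurable X-avoiding set I ⊆ S^1 with λ(I) = 1/2. -/
open MeasureTheory Metric Matrix Filter
open scoped RealInnerProductSpace ENNReal

noncomputable section

/-- Linear identification of the Euclidean plane with `ℂ`. -/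
def toC : Eucl 2 ≃ₗᵢ[ℝ] ℂ := Complex.orthonormalBasisOneI.repr.symm

/-- Rotation of the plane by the angle `θ`. -/
def rotE (θ : ℝ) : Eucl 2 ≃ₗᵢ[ℝ] Eucl 2 :=
  (toC.trans (rotation (Circle.exp θ))).trans toC.symm

lemma toC_rotE (θ : ℝ) (v : Eucl 2) :
    toC (rotE θ v) = Complex.exp (θ * Complex.I) * toC v := by
  simp [rotE, rotation_apply]

/-- Rotation of the circle by the angle `θ`. -/
def rotS (θ : ℝ) (ξ : Sph 2) : Sph 2 :=
  ⟨rotE θ ξ, by simp⟩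

lemma measurable_rotS (θ : ℝ) : Measurable (rotS θ) := by
  apply Continuous.measurable
  unfold rotS
  fun_prop

open scoped Pointwise in
lemma cone_rot (θ : ℝ) (I : Set (Sph 2)) :
    Set.Ioo (0 : ℝ) 1 • (((↑) : Sph 2 → Eucl 2) '' (rotS θ ⁻¹' I)) =
      rotE θ ⁻¹' (Set.Ioo (0 : ℝ) 1 • (((↑) : Sph 2 → Eucl 2) '' I)) := by
  ext v
  simp only [Set.mem_smul, Set.mem_preimage, Set.mem_image]
  constructor
  · rintro ⟨r, hr, _, ⟨ξ, hξ, rfl⟩, rfl⟩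
    exact ⟨r, hr, _, ⟨_, hξ, rfl⟩, by simp [rotS]⟩
  · rintro ⟨r, hr, _, ⟨ξ, hξ, rfl⟩, h⟩
    refine ⟨r, hr, _, ⟨⟨(rotE θ).symm ξ, by simp⟩, ?_, rfl⟩, ?_⟩
    · simpa [rotS] using hξ
    · apply (rotE θ).injective
      simp [h]

lemma sphMeasure_rot (θ : ℝ) {I : Set (Sph 2)} (hI : MeasurableSet I) :
    sphMeasure 2 (rotS θ ⁻¹' I) = sphMeasure 2 I := by
  unfold sphMeasure
  rw [Measure.smul_apply, Measure.smul_apply, Measure.toSphere_apply' _ hI,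
    Measure.toSphere_apply' _ (measurable_rotS θ hI), cone_rot]
  congr 2
  exact (rotE θ).measurePreserving.measure_preimage_equiv (f := (rotE θ).toMeasurableEquiv) _

instance : IsProbabilityMeasure (sphMeasure 2) where
  measure_univ := by
    unfold sphMeasure
    rw [Measure.smul_apply, smul_eq_mul]
    apply ENNReal.inv_mul_cancel
    · rw [Ne, Measure.measure_univ_eq_zero]
      exact Measure.toSphere_ne_zero _
    · exact measure_ne_top _ _

lemma inner_toC (v w : Eucl 2) :
    ⟪v, w⟫ = (toC w * (starRingEnd ℂ) (toC v)).re := by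
  rw [← toC.inner_map_map, Complex.inner]

lemma norm_toC (ξ : Sph 2) : ‖toC (ξ : Eucl 2)‖ = 1 := by simp

lemma toC_mul_conj (ξ : Sph 2) :
    toC (ξ : Eucl 2) * (starRingEnd ℂ) (toC (ξ : Eucl 2)) = 1 := by
  rw [Complex.mul_conj, Complex.normSq_eq_norm_sq, norm_toC]; simp

lemma inner_rotS (θ : ℝ) (ξ : Sph 2) :
    ⟪(ξ : Eucl 2), (rotS θ ξ : Eucl 2)⟫ = Real.cos θ := by
  rw [inner_toC]
  simp only [rotS]
  rw [toC_rotE, mul_assoc, toC_mul_conj, mul_one, Complex.exp_ofReal_mul_I_re]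

lemma rot_of_inner (θ : ℝ) (ξ η : Sph 2)
    (h : ⟪(ξ : Eucl 2), (η : Eucl 2)⟫ = Real.cos θ) : η = rotS θ ξ ∨ ξ = rotS θ η := by
  have key : ∀ α β : Sph 2,
      toC (β : Eucl 2) * (starRingEnd ℂ) (toC (α : Eucl 2)) = Complex.exp (θ * Complex.I) →
      β = rotS θ α := by
    intro α β hab
    apply Subtype.ext
    apply toC.injective
    simp only [rotS]
    rw [toC_rotE, ← hab, mul_assoc, mul_comm ((starRingEnd ℂ) _), toC_mul_conj, mul_one]
  set u := toC (η : Eucl 2) * (starRingEnd ℂ) (toC (ξ : Eucl 2)) with hu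
  have hre : u.re = Real.cos θ := by rw [← h, inner_toC]
  have hn : u.re ^ 2 + u.im ^ 2 = 1 := by
    have : ‖u‖ ^ 2 = 1 := by
      rw [hu, norm_mul, RCLike.norm_conj, norm_toC, norm_toC]; norm_num
    rw [← Complex.normSq_eq_norm_sq, Complex.normSq_apply] at this
    linarith
  have hs : u.im ^ 2 = Real.sin θ ^ 2 := by
    have := Real.sin_sq_add_cos_sq θ
    rw [hre] at hn
    linarith
  rcases sq_eq_sq_iff_eq_or_eq_neg.mp hs with h1 | h1
  · left
    apply key
    apply Complex.ext
    · rw [← hu, hre, Complex.exp_ofReal_mul_I_re]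
    · rw [← hu, h1, Complex.exp_ofReal_mul_I_im]
  · right
    apply key
    have hc : toC (ξ : Eucl 2) * (starRingEnd ℂ) (toC (η : Eucl 2)) = (starRingEnd ℂ) u := by
      rw [hu]; simp [mul_comm]
    rw [hc]
    apply Complex.ext
    · rw [Complex.conj_re, hre, Complex.exp_ofReal_mul_I_re]
    · rw [Complex.conj_im, h1, Complex.exp_ofReal_mul_I_im, neg_neg]

/-- A half-open half plane. -/
def halfPl : Set ℂ := {z | 0 < z.im ∨ (z.im = 0 ∧ 0 < z.re)}

lemma measurable_halfPl : MeasurableSet halfPl := by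
  have h1 : MeasurableSet {z : ℂ | 0 < z.im} :=
    measurableSet_lt measurable_const Complex.measurable_im
  have h2 : MeasurableSet {z : ℂ | z.im = 0} :=
    measurableSet_eq_fun Complex.measurable_im measurable_const
  have h3 : MeasurableSet {z : ℂ | 0 < z.re} :=
    measurableSet_lt measurable_const Complex.measurable_re
  exact h1.union (h2.inter h3)

lemma neg_mem_halfPl {z : ℂ} (hz : z ≠ 0) : -z ∈ halfPl ↔ z ∉ halfPl := by
  simp only [halfPl, Set.mem_setOf_eq, Complex.neg_im, Complex.neg_re]
  have hz' : ¬ (z.re = 0 ∧ z.im = 0) := fun h => hz (Complex.ext h.1 h.2)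
  grind

/-- The extremal set: alternate arcs of length `2π / (2m)`. -/
def arcs (m : ℕ) : Set (Sph 2) := {ξ | toC (ξ : Eucl 2) ^ m ∈ halfPl}

lemma measurable_arcs (m : ℕ) : MeasurableSet (arcs m) := by
  have : Measurable (fun ξ : Sph 2 => toC (ξ : Eucl 2) ^ m) := by
    apply Continuous.measurable
    fun_prop
  exact this measurable_halfPl

lemma rot_arcs (m : ℕ) (θ : ℝ) (h : Complex.exp (θ * Complex.I) ^ m = -1) :
    rotS θ ⁻¹' (arcs m) = (arcs m)ᶜ := by
  ext ξ
  have h0 : toC (ξ : Eucl 2) ^ m ≠ 0 := by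
    apply pow_ne_zero
    rw [← norm_ne_zero_iff, norm_toC]
    norm_num
  simp only [arcs, rotS, Set.mem_preimage, Set.mem_setOf_eq, Set.mem_compl_iff]
  rw [toC_rotE, mul_pow, h, neg_one_mul, neg_mem_halfPl h0]

/-- If `x ∈ [-1,1]` and `t = arccos x / (2π)` is rational, `t = p/q` with `p, q` coprime and
`q` even, then the supremum of the normalised measures of measurable `{x}`-avoiding subsets
of the unit circle `S^1` equals `1/2`, and it is attained by some measurable `{x}`-avoiding
set. -/
theorem circle_sup_q_even (x : ℝ) (hx : x ∈ Set.Icc (-1 : ℝ) 1) (p q : ℕ)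
    (hq : 0 < q) (hpq : Nat.Coprime p q) (hqeven : Even q)
    (ht : Real.arccos x / (2 * Real.pi) = (p : ℝ) / (q : ℝ)) :
    IsGreatest {m : ℝ≥0∞ | ∃ I : Set (Sph 2),
      MeasurableSet I ∧ Avoids {x} I ∧ sphMeasure 2 I = m} (1 / 2) := by
  have hcos : Real.cos (Real.arccos x) = x := Real.cos_arccos hx.1 hx.2
  set θ := Real.arccos x with hθ
  obtain ⟨m, hm⟩ := hqeven
  have hpodd : Odd p := by
    rw [← Nat.not_even_iff_odd]
    intro hp
    have h2 : 2 ∣ Nat.gcd p q := Nat.dvd_gcd hp.two_dvd ⟨m, by omega⟩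
    rw [hpq] at h2
    omega
  have hmθ : (m : ℝ) * θ = p * Real.pi := by
    have hq0 : (q : ℝ) ≠ 0 := by positivity
    have hqm : (q : ℝ) = m + m := by rw [hm]; push_cast; ring
    have hpi := Real.pi_ne_zero
    rw [div_eq_div_iff (by positivity) hq0, hqm] at ht
    linarith
  have hexp : Complex.exp (θ * Complex.I) ^ m = -1 := by
    rw [← Complex.exp_nat_mul]
    have : (m : ℂ) * (θ * Complex.I) = p * (Real.pi * Complex.I) := by
      rw [← mul_assoc, ← mul_assoc]
      congr 1
      exact_mod_cast hmθ
    rw [this, Complex.exp_nat_mul, Complex.exp_pi_mul_I, hpodd.neg_one_pow]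
  constructor
  · refine ⟨arcs m, measurable_arcs m, ?_, ?_⟩
    · intro ξ hξ η hη h
      have hr := rot_arcs m θ hexp
      have hno : ∀ α ∈ arcs m, rotS θ α ∉ arcs m := by
        intro α hα hα'
        have : α ∈ rotS θ ⁻¹' (arcs m) := hα'
        rw [hr] at this
        exact this hα
      rw [Set.mem_singleton_iff, ← hcos] at h
      rcases rot_of_inner θ ξ η h with rfl | rfl
      · exact hno _ hξ hη
      · exact hno _ hη hξ
    · have h1 := sphMeasure_rot θ (measurable_arcs m)
      rw [rot_arcs m θ hexp] at h1
      have h2 := measure_add_measure_compl (μ := sphMeasure 2) (measurable_arcs m)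
      rw [h1, measure_univ, ← two_mul] at h2
      rw [ENNReal.eq_div_iff (by norm_num) (by norm_num), h2]
  · rintro _ ⟨I, hI, hav, rfl⟩
    have hd : Disjoint I (rotS θ ⁻¹' I) := by
      rw [Set.disjoint_left]
      intro ξ hξ hξ'
      apply hav ξ hξ _ hξ'
      rw [Set.mem_singleton_iff, inner_rotS, hcos]
    have h1 := measure_union (μ := sphMeasure 2) hd (measurable_rotS θ hI)
    rw [sphMeasure_rot θ hI, ← two_mul] at h1
    rw [ENNReal.le_div_iff_mul_le (by norm_num) (by norm_num), mul_comm, ← h1]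
    exact prob_le_one
end
end

section
/- Let x ∈ [-1,1], X = {x}, and suppose t = arccos(x)/(2π) is irrational. Then there exists no Lebesgue measurable X-avoiding set I ⊆ S^1 with λ(I) = 1/2; equivalently, the supremum 1/2 of the measures of measurable X-avoiding sets is not attained as a maximum. -/
open MeasureTheory Metric Matrix Filter
open scoped RealInnerProductSpace ENNReal

noncomputable section

open scoped Pointwise in
lemma sph_map_isometry (L : Eucl 2 ≃ₗᵢ[ℝ] Eucl 2) (T : Sph 2 → Sph 2)
    (hT : Continuous T) (h : ∀ s, (T s : Eucl 2) = L s) :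
    (sphMeasure 2).map T = sphMeasure 2 := by
  have key : ((volume : Measure (Eucl 2)).toSphere).map T = (volume : Measure (Eucl 2)).toSphere := by
    ext s hs
    rw [Measure.map_apply hT.measurable hs, Measure.toSphere_apply' _ (hT.measurable hs),
      Measure.toSphere_apply' _ hs]
    congr 1
    have : Set.Ioo (0:ℝ) 1 • ((↑) '' (T ⁻¹' s) : Set (Eucl 2))
        = L.toMeasurableEquiv ⁻¹' (Set.Ioo (0:ℝ) 1 • ((↑) '' s : Set (Eucl 2))) := by
      ext v
      simp only [Set.mem_smul, Set.mem_preimage, Set.mem_image]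
      constructor
      · rintro ⟨r, hr, _, ⟨w, hw, rfl⟩, rfl⟩
        exact ⟨r, hr, _, ⟨T w, hw, rfl⟩, by rw [h]; exact (map_smul L r _).symm⟩
      · rintro ⟨r, hr, _, ⟨w, hw, rfl⟩, hv⟩
        have hw1 : ‖(w : Eucl 2)‖ = 1 := by simpa using w.2
        let w' : Sph 2 := ⟨L.symm w, by simp [hw1]⟩
        refine ⟨r, hr, L.symm w, ⟨w', ?_, rfl⟩, ?_⟩
        · have : T w' = w := Subtype.ext (by rw [h]; simp [w'])
          rwa [this]
        · rw [← map_smul, hv]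
          exact L.symm_apply_apply v
    rw [this]
    exact MeasurePreserving.measure_preimage_equiv (f := L.toMeasurableEquiv) L.measurePreserving _
  unfold sphMeasure
  rw [Measure.map_smul, key]

instance sph_prob : IsProbabilityMeasure (sphMeasure 2) := by
  constructor
  unfold sphMeasure
  rw [Measure.smul_apply, smul_eq_mul]
  apply ENNReal.inv_mul_cancel
  · rw [Ne, Measure.measure_univ_eq_zero]
    exact Measure.toSphere_ne_zero _
  · exact measure_ne_top _ _

/-- identification of `ℂ` with the Euclidean plane. -/
def ee : ℂ ≃ₗᵢ[ℝ] Eucl 2 := Complex.orthonormalBasisOneI.repr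

/-- The circle as the unit sphere of the Euclidean plane. -/
def circSph : Circle ≃ₜ Sph 2 where
  toFun z := ⟨ee z, by simp [Circle.norm_coe]⟩
  invFun s := ⟨ee.symm s, by
    have hw1 : ‖(s : Eucl 2)‖ = 1 := by simpa using s.2
    simp [Submonoid.unitSphere, hw1]⟩
  left_inv z := by ext; simp
  right_inv s := by apply Subtype.ext; simp
  continuous_toFun := by
    refine Continuous.subtype_mk (ee.continuous.comp ?_) _
    exact continuous_subtype_val
  continuous_invFun := by
    refine Continuous.subtype_mk (ee.symm.continuous.comp ?_) _
    exact continuous_subtype_val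

/-- The additive circle as the unit sphere of the Euclidean plane. -/
def psi : AddCircle (2 * Real.pi) ≃ₜ Sph 2 := AddCircle.homeomorphCircle'.trans circSph

instance fact_two_pi : Fact (0 < 2 * Real.pi) := ⟨by positivity⟩

lemma psi_coe (t : ℝ) : (psi (t : AddCircle (2 * Real.pi)) : Eucl 2) = ee (Circle.exp t) := rfl

lemma psi_add (a b : AddCircle (2 * Real.pi)) :
    (psi (a + b) : Eucl 2) =
      ((ee.symm.trans (rotation (AddCircle.homeomorphCircle' a))).trans ee) (psi b) := by
  induction a using QuotientAddGroup.induction_on with | H a =>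
  induction b using QuotientAddGroup.induction_on with | H b =>
  have : ((a : AddCircle (2 * Real.pi)) + (b : AddCircle (2 * Real.pi))) = ((a + b : ℝ) : AddCircle (2 * Real.pi)) := rfl
  erw [this, psi_coe, psi_coe]
  simp [AddCircle.homeomorphCircle'_apply_mk]

/-- transferred measure -/
def nu : Measure (AddCircle (2 * Real.pi)) := (sphMeasure 2).map psi.symm

instance nu_prob : IsProbabilityMeasure nu :=
  Measure.isProbabilityMeasure_map psi.symm.continuous.measurable.aemeasurable

instance nu_inv : nu.IsAddLeftInvariant := by
  constructor
  intro a
  unfold nu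
  have hc : Continuous (fun s => psi (a + psi.symm s)) := by fun_prop
  rw [Measure.map_map (by fun_prop) psi.symm.continuous.measurable]
  have : ((a + ·) ∘ psi.symm : Sph 2 → _) = psi.symm ∘ (fun s => psi (a + psi.symm s)) := by
    ext s; simp
  rw [this, ← Measure.map_map psi.symm.continuous.measurable hc.measurable,
    sph_map_isometry ((ee.symm.trans (rotation (AddCircle.homeomorphCircle' a))).trans ee) _ hc]
  intro s
  rw [psi_add]; simp

lemma inner_psi (θ : ℝ) (a : AddCircle (2 * Real.pi)) :
    ⟪(psi a : Eucl 2), (psi ((θ : AddCircle (2 * Real.pi)) + a) : Eucl 2)⟫ = Real.cos θ := by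
  induction a using QuotientAddGroup.induction_on with | H a =>
  have : ((θ : AddCircle (2 * Real.pi)) + (a : AddCircle (2 * Real.pi))) = ((θ + a : ℝ) : AddCircle (2 * Real.pi)) := rfl
  erw [this, psi_coe, psi_coe]
  rw [LinearIsometryEquiv.inner_map_map, Complex.inner, Circle.coe_exp, Circle.coe_exp,
    ← Complex.exp_conj, ← Complex.exp_add]
  have : (starRingEnd ℂ) (↑a * Complex.I) + ↑(θ + a) * Complex.I = θ * Complex.I := by
    simp; ring
  rw [add_comm, this, Complex.exp_ofReal_mul_I_re]

/-- If `x ∈ [-1,1]` and `t = arccos x / (2π)` is irrational, then there is no measurable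
`{x}`-avoiding subset of the unit circle `S^1` of normalised measure exactly `1/2`; that is,
the supremum `1/2` is not attained as a maximum. -/
theorem circle_sup_irrational_not_attained (x : ℝ) (hx : x ∈ Set.Icc (-1 : ℝ) 1)
    (hirr : Irrational (Real.arccos x / (2 * Real.pi))) :
    ¬ ∃ I : Set (Sph 2), MeasurableSet I ∧ Avoids {x} I ∧ sphMeasure 2 I = 1 / 2 := by
  rintro ⟨I, hI, hav, hm⟩
  set θ := Real.arccos x with hθ
  have hcos : Real.cos θ = x := Real.cos_arccos hx.1 hx.2
  set g : AddCircle (2 * Real.pi) := (θ : AddCircle (2 * Real.pi)) with hg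
  set J : Set (AddCircle (2 * Real.pi)) := psi ⁻¹' I with hJdef
  have hJ : MeasurableSet J := psi.continuous.measurable hI
  have hnJ : nu J = 1 / 2 := by
    rw [nu, Measure.map_apply psi.symm.continuous.measurable hJ, ← hm]
    congr 1
    ext s; simp [J]
  have hmp : MeasurePreserving (g + ·) nu nu := measurePreserving_add_left nu g
  have hsub : (g + ·) ⁻¹' J ⊆ Jᶜ := by
    intro a ha ha'
    exact hav _ ha' _ ha (by rw [Set.mem_singleton_iff, inner_psi, hcos])
  have hae : ((g + ·) ⁻¹' J : Set _) =ᵐ[nu] (Jᶜ : Set _) := by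
    refine ae_eq_of_subset_of_measure_ge hsub ?_ (hmp.measurable hJ).nullMeasurableSet
      (measure_ne_top _ _)
    rw [hmp.measure_preimage hJ.nullMeasurableSet, prob_compl_eq_one_sub hJ, hnJ]
    simp
  have hae2 : (((2 : ℤ) • g + ·) ⁻¹' J : Set _) =ᵐ[nu] J := by
    have h1 : (((2 : ℤ) • g + ·) ⁻¹' J : Set _) = (g + ·) ⁻¹' ((g + ·) ⁻¹' J) := by
      ext a
      simp only [Set.mem_preimage, two_zsmul, add_assoc]
    rw [h1]
    have h2 : ((g + ·) ⁻¹' ((g + ·) ⁻¹' J) : Set _) =ᵐ[nu] ((g + ·) ⁻¹' Jᶜ : Set _) :=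
      hmp.quasiMeasurePreserving.preimage_ae_eq hae
    refine h2.trans ?_
    rw [Set.preimage_compl]
    simpa using hae.compl
  have hd : DenseRange (· • ((2 : ℤ) • g) : ℤ → AddCircle (2 * Real.pi)) := by
    have h3 : (2 : ℤ) • g = ((2 * θ : ℝ) : AddCircle (2 * Real.pi)) := by
      rw [hg, ← AddCircle.coe_zsmul]; simp
    rw [h3, AddCircle.denseRange_zsmul_coe_iff, mul_div_assoc]
    exact_mod_cast hirr.intCast_mul (m := 2) (by norm_num)
  have herg := ergodic_add_left_of_denseRange_zsmul hd nu
  rcases herg.quasiErgodic.ae_empty_or_univ₀ hJ.nullMeasurableSet hae2 with h | h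
  · have := measure_congr h
    rw [hnJ] at this; simp at this
  · have := measure_congr h
    rw [hnJ, measure_univ] at this; simp at this
end
end

section
/- Every Lebesgue measurable subset I of the unit sphere S² in ℝ³ such that no two vectors in I are orthogonal (i.e., ⟨ξ,η⟩ ≠ 0 for all ξ, η ∈ I) satisfies λ(I) < 0.313; consequently, the supremum α(3) of the normalized measures of measurable {0}-avoiding subsets of S² is strictly less than 0.313. -/
open MeasureTheory Metric Matrix Filter
open scoped RealInnerProductSpace ENNReal

noncomputable section

/-! ### A finite orthogonality graph on 37 rays and its weighted independence number -/

namespace Witsenhausen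

/-- Integer vectors in dimension three. -/
abbrev Pt : Type := ℤ × ℤ × ℤ

/-- Orthogonality of integer vectors. -/
def orth (u v : Pt) : Bool := decide (u.1 * v.1 + u.2.1 * v.2.1 + u.2.2 * v.2.2 = 0)

/-- The maximal weight in a list. -/
def mx (c : List (Pt × ℕ)) : ℕ := c.foldr (fun v m => max v.2 m) 0

/-- Upper bound for the weight of an independent set, one vertex per clique. -/
def ub (C : List (List (Pt × ℕ))) : ℕ := C.foldr (fun c m => mx c + m) 0

/-- Branch and bound: does every independent set have weight at most `B`? -/
def chk : ℕ → List (List (Pt × ℕ)) → ℕ → Bool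
  | 0, _, _ => false
  | n + 1, C, B => decide (ub C ≤ B) || match C with
    | [] => false
    | c :: R => chk n R B && c.all (fun v => decide (v.2 ≤ B) &&
        chk n (R.map (fun k => k.filter (fun u => !(orth u.1 v.1)))) (B - v.2))

/-- The 37 rays, with weights, partitioned into cliques. -/
def rays : List (List (Pt × ℕ)) :=
  [[((1, 0, 0), 8), ((0, 1, 0), 8), ((0, 0, 1), 8)],
   [((1, 0, 1), 6), ((1, 0, -1), 6)],
   [((1, 1, -1), 5), ((1, -1, 0), 6), ((1, 1, 2), 1)],
   [((1, 1, 1), 5), ((0, 1, -1), 6), ((2, -1, -1), 1)],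
   [((0, 1, 1), 6), ((1, -1, 1), 5), ((2, 1, -1), 1)],
   [((1, -1, -1), 5), ((1, -1, 2), 1), ((1, 1, 0), 6)],
   [((1, -2, 1), 1), ((2, 1, 0), 1)], [((1, 0, -2), 1), ((2, 0, 1), 1)],
   [((0, 2, -1), 1), ((1, -1, -2), 1)], [((2, -1, 0), 1), ((1, 2, 0), 1)],
   [((0, 2, 1), 1), ((0, 1, -2), 1)], [((1, -2, 0), 1), ((2, 1, 1), 1)],
   [((1, -2, -1), 1)], [((0, 1, 2), 1), ((1, 2, -1), 1)], [((1, 1, -2), 1)],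
   [((2, -1, 1), 1)], [((1, 2, 1), 1)], [((1, 0, 2), 1), ((2, 0, -1), 1)]]

theorem chk_rays : chk 20 rays 32 = true := by decide +kernel

theorem rays_clique : ∀ c ∈ rays, c.Pairwise (fun u v => orth u.1 v.1 = true) := by
  decide +kernel

theorem rays_ne : ∀ v ∈ rays.flatten, v.1 ≠ (0, 0, 0) := by decide +kernel

theorem rays_weight : (rays.flatten.map Prod.snd).sum = 104 := by decide +kernel

open Classical in
/-- Total weight of the members of `S` in the list. -/
noncomputable def val (S : Set Pt) (L : List (Pt × ℕ)) : ℕ := (L.map (fun v => if v.1 ∈ S then v.2 else 0)).sum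

theorem val_nil (S : Set Pt) : val S [] = 0 := rfl

open Classical in
theorem val_cons (S : Set Pt) (v : Pt × ℕ) (L : List (Pt × ℕ)) :
    val S (v :: L) = (if v.1 ∈ S then v.2 else 0) + val S L := by
  simp [val]

theorem val_append (S : Set Pt) (L M : List (Pt × ℕ)) :
    val S (L ++ M) = val S L + val S M := by
  simp [val]

theorem le_mx {c : List (Pt × ℕ)} {v : Pt × ℕ} (h : v ∈ c) : v.2 ≤ mx c := by
  induction c with
  | nil => simp at h
  | cons a t ih =>
    simp only [mx, List.foldr_cons]
    rcases List.mem_cons.1 h with h | h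
    · subst h; exact le_max_left _ _
    · exact (ih h).trans (le_max_right _ _)

theorem val_filter (S : Set Pt) (hS : ∀ u ∈ S, ∀ v ∈ S, orth u v = false) (v : Pt)
    (hv : v ∈ S) (L : List (Pt × ℕ)) :
    val S (L.filter (fun u => !(orth u.1 v))) = val S L := by
  induction L with
  | nil => rfl
  | cons a t ih =>
    rw [List.filter_cons, val_cons]
    by_cases ha : a.1 ∈ S
    · simp [hS _ ha _ hv, val_cons, ih]
    · split_ifs
      · simp [val_cons, ih, ha]
      · simp [ih]

theorem val_clique (S : Set Pt) (hS : ∀ u ∈ S, ∀ v ∈ S, orth u v = false)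
    (c : List (Pt × ℕ)) (hc : c.Pairwise (fun u v => orth u.1 v.1 = true)) :
    val S c = 0 ∨ ∃ v ∈ c, v.1 ∈ S ∧ val S c = v.2 := by
  induction c with
  | nil => left; rfl
  | cons a t ih =>
    rw [List.pairwise_cons] at hc
    by_cases ha : a.1 ∈ S
    · right
      refine ⟨a, by simp, ha, ?_⟩
      rw [val_cons, if_pos ha]
      rcases ih hc.2 with h | ⟨v, hv, hvS, -⟩
      · simp [h]
      · have h1 := hc.1 v hv
        rw [hS _ ha _ hvS] at h1
        exact absurd h1 (by simp)
    · rw [val_cons, if_neg ha, zero_add]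
      rcases ih hc.2 with h | ⟨v, hv, h⟩
      · exact Or.inl h
      · exact Or.inr ⟨v, List.mem_cons_of_mem _ hv, h⟩

theorem val_le_ub (S : Set Pt) (hS : ∀ u ∈ S, ∀ v ∈ S, orth u v = false)
    (C : List (List (Pt × ℕ)))
    (hC : ∀ c ∈ C, c.Pairwise (fun u v => orth u.1 v.1 = true)) :
    val S C.flatten ≤ ub C := by
  induction C with
  | nil => simp [val]
  | cons c R ih =>
    have h1 := ih (fun d hd => hC d (List.mem_cons_of_mem _ hd))
    have h2 : val S c ≤ mx c := by
      rcases val_clique S hS c (hC c (by simp)) with h | ⟨v, hv, -, h⟩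
      · omega
      · rw [h]; exact le_mx hv
    rw [List.flatten_cons, val_append]
    exact Nat.add_le_add h2 h1

theorem chk_sound (S : Set Pt) (hS : ∀ u ∈ S, ∀ v ∈ S, orth u v = false) (n : ℕ) :
    ∀ (C : List (List (Pt × ℕ))) (B : ℕ),
    (∀ c ∈ C, c.Pairwise (fun u v => orth u.1 v.1 = true)) →
    chk n C B = true → val S C.flatten ≤ B := by
  induction n with
  | zero => intro C B _ h; simp [chk] at h
  | succ n ih =>
    intro C B hC h
    rw [chk.eq_def] at h
    simp only [Bool.or_eq_true, decide_eq_true_eq] at h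
    rcases h with h | h
    · exact (val_le_ub S hS C hC).trans h
    · cases C with
      | nil => simp at h
      | cons c R =>
        simp only [Bool.and_eq_true, List.all_eq_true, decide_eq_true_eq] at h
        have hR : ∀ c ∈ R, c.Pairwise (fun u v => orth u.1 v.1 = true) :=
          fun d hd => hC d (List.mem_cons_of_mem _ hd)
        rw [List.flatten_cons, val_append]
        rcases val_clique S hS c (hC c (by simp)) with h0 | ⟨v, hv, hvS, h0⟩
        · have := ih R B hR h.1
          omega
        · obtain ⟨h1, h2⟩ := h.2 v hv
          have := ih _ _ (by
            intro d hd
            obtain ⟨k, hk, rfl⟩ := List.mem_map.1 hd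
            exact (hR k hk).filter _) h2
          rw [← List.filter_flatten, val_filter S hS v.1 hvS] at this
          omega

theorem val_rays (S : Set Pt) (hS : ∀ u ∈ S, ∀ v ∈ S, orth u v = false) :
    val S rays.flatten ≤ 32 :=
  chk_sound S hS 20 rays 32 rays_clique chk_rays

end Witsenhausen

namespace Witsenhausen

/-- The orthogonal group, as the unitary elements of the continuous endomorphisms. -/
abbrev OG : Type := unitary (Eucl 3 →L[ℝ] Eucl 3)

instance : MeasurableSpace OG := borel OG

instance : BorelSpace OG := ⟨rfl⟩

theorem og_norm (R : OG) (x : Eucl 3) : ‖(R : Eucl 3 →L[ℝ] Eucl 3) x‖ = ‖x‖ :=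
  (Unitary.linearIsometryEquiv R).norm_map x

theorem og_inner (R : OG) (x y : Eucl 3) :
    ⟪(R : Eucl 3 →L[ℝ] Eucl 3) x, (R : Eucl 3 →L[ℝ] Eucl 3) y⟫ = ⟪x, y⟫ :=
  (Unitary.linearIsometryEquiv R).inner_map_map x y

instance : ContinuousStar (Eucl 3 →L[ℝ] Eucl 3) :=
  ⟨(ContinuousLinearMap.adjoint (𝕜 := ℝ) (E := Eucl 3) (F := Eucl 3)).continuous⟩

instance : ProperSpace (Eucl 3 →L[ℝ] Eucl 3) := FiniteDimensional.proper ℝ _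

instance : CompactSpace OG := by
  refine isCompact_iff_compactSpace.1 (Metric.isCompact_of_isClosed_isBounded isClosed_unitary ?_)
  refine (Metric.isBounded_closedBall (x := (0 : Eucl 3 →L[ℝ] Eucl 3)) (r := 1)).subset ?_
  intro R hR
  rw [mem_closedBall_zero_iff]
  refine ContinuousLinearMap.opNorm_le_bound _ zero_le_one (fun x => ?_)
  rw [one_mul]
  exact (og_norm ⟨R, hR⟩ x).le

instance : SecondCountableTopology OG :=
  TopologicalSpace.Subtype.secondCountableTopology
    (unitary (Eucl 3 →L[ℝ] Eucl 3) : Set (Eucl 3 →L[ℝ] Eucl 3))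

/-- Action of the orthogonal group on the sphere. -/
def act (R : OG) (v : Sph 3) : Sph 3 :=
  ⟨(R : Eucl 3 →L[ℝ] Eucl 3) v, by
    rw [mem_sphere_zero_iff_norm, og_norm]; exact mem_sphere_zero_iff_norm.1 v.2⟩

theorem act_mul (R T : OG) (v : Sph 3) : act (R * T) v = act R (act T v) := rfl

theorem act_one (v : Sph 3) : act 1 v = v := rfl

theorem act_continuous : Continuous (fun p : OG × Sph 3 => act p.1 p.2) := by
  refine Continuous.subtype_mk ?_ _
  exact (continuous_subtype_val.comp continuous_fst).clm_apply
    (continuous_subtype_val.comp continuous_snd)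

theorem act_trans (v w : Sph 3) : ∃ R : OG, act R v = w := by
  have h : ‖(v : Eucl 3)‖ = ‖(w : Eucl 3)‖ := by
    rw [mem_sphere_zero_iff_norm.1 v.2, mem_sphere_zero_iff_norm.1 w.2]
  refine ⟨Unitary.linearIsometryEquiv.symm
    (Submodule.reflection (ℝ ∙ ((v : Eucl 3) - (w : Eucl 3)))ᗮ), Subtype.ext ?_⟩
  exact Submodule.reflection_sub h

open scoped Pointwise in
/-- The surface measure is invariant. -/
theorem sph_invariant (R : OG) (I : Set (Sph 3)) (hI : MeasurableSet I) :
    sphMeasure 3 (act R ⁻¹' I) = sphMeasure 3 I := by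
  have hc : Continuous (act R) := act_continuous.comp (Continuous.prodMk_right R)
  simp only [sphMeasure, Measure.smul_apply]
  congr 1
  rw [Measure.toSphere_apply' _ hI, Measure.toSphere_apply' _ (hc.measurable hI)]
  congr 1
  set e := Unitary.linearIsometryEquiv R with he
  have hmp : MeasurePreserving e := e.measurePreserving
  have := hmp.measure_preimage_equiv (f := e.toHomeomorph.toMeasurableEquiv)
    (Set.Ioo (0 : ℝ) 1 • ((↑) '' I : Set (Eucl 3)))
  rw [← this]
  congr 1
  ext x
  simp only [Set.mem_smul, Set.mem_preimage, Set.mem_image]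
  constructor
  · rintro ⟨t, ht, -, ⟨v, hv, rfl⟩, rfl⟩
    exact ⟨t, ht, _, ⟨act R v, hv, rfl⟩, (e.map_smul t v).symm⟩
  · rintro ⟨t, ht, -, ⟨v, hv, rfl⟩, hx⟩
    refine ⟨t, ht, _, ⟨act R⁻¹ v, ?_, rfl⟩, ?_⟩
    · rw [← act_mul, mul_inv_cancel, act_one]; exact hv
    · apply e.injective
      refine Eq.trans ?_ hx
      have : e (act R⁻¹ v : Eucl 3) = v := by
        change ((act R (act R⁻¹ v) : Sph 3) : Eucl 3) = v
        rw [← act_mul, mul_inv_cancel, act_one]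
      rw [e.map_smul, this]

instance : IsProbabilityMeasure (sphMeasure 3) := by
  constructor
  simp only [sphMeasure, Measure.smul_apply, smul_eq_mul]
  refine ENNReal.inv_mul_cancel ?_ (measure_ne_top _ _)
  rw [Ne, Measure.measure_univ_eq_zero]
  exact Measure.toSphere_ne_zero _

/-- Normalised Haar measure on the orthogonal group. -/
def haarOG : Measure OG := Measure.haarMeasure ⊤

instance : Measure.IsHaarMeasure haarOG := by unfold haarOG; infer_instance

instance : IsProbabilityMeasure haarOG :=
  ⟨by simpa [haarOG] using Measure.haarMeasure_self (K₀ := (⊤ : TopologicalSpace.PositiveCompacts OG))⟩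

theorem measurable_inv_act : Measurable (fun p : OG × Sph 3 => act p.1⁻¹ p.2) :=
  (act_continuous.comp (continuous_fst.inv.prodMk continuous_snd)).measurable

theorem measurable_inv_act_left (v : Sph 3) : Measurable (fun R : OG => act R⁻¹ v) :=
  (act_continuous.comp (continuous_inv.prodMk continuous_const)).measurable

/-- A random rotate of any fixed point lies in `I` with probability `λ(I)`. -/
theorem haar_hit (I : Set (Sph 3)) (hI : MeasurableSet I) (v : Sph 3) :
    haarOG {R | act R⁻¹ v ∈ I} = sphMeasure 3 I := by
  have hconst : ∀ w : Sph 3, haarOG {R | act R⁻¹ w ∈ I} = haarOG {R | act R⁻¹ v ∈ I} := by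
    intro w
    obtain ⟨g, rfl⟩ := act_trans w v
    rw [← measure_preimage_mul haarOG g {R | act R⁻¹ (act g w) ∈ I}]
    congr 1
    ext R
    simp only [Set.mem_ofPred_eq, Set.mem_preimage, ← act_mul, _root_.mul_inv_rev, inv_mul_cancel_right]
  have hA : MeasurableSet ((fun p : OG × Sph 3 => act p.1⁻¹ p.2) ⁻¹' I) := measurable_inv_act hI
  have h1 := Measure.prod_apply (μ := haarOG) (ν := sphMeasure 3) hA
  have h2 := Measure.prod_apply_symm (μ := haarOG) (ν := sphMeasure 3) hA
  have e1 : ∀ R : OG, sphMeasure 3 (Prod.mk R ⁻¹' ((fun p : OG × Sph 3 => act p.1⁻¹ p.2) ⁻¹' I))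
      = sphMeasure 3 I := fun R => sph_invariant R⁻¹ I hI
  have e2 : ∀ w : Sph 3, haarOG ((fun R => (R, w)) ⁻¹'
      ((fun p : OG × Sph 3 => act p.1⁻¹ p.2) ⁻¹' I)) = haarOG {R | act R⁻¹ v ∈ I} := hconst
  simp only [e1, lintegral_const, measure_univ, mul_one] at h1
  simp only [e2, lintegral_const, measure_univ, mul_one] at h2
  rw [← h1, ← h2]

/-- Integer vector as a Euclidean vector. -/
def vec (p : Pt) : Eucl 3 := !₂[(p.1 : ℝ), (p.2.1 : ℝ), (p.2.2 : ℝ)]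

theorem vec_ne (p : Pt) (hp : p ≠ (0, 0, 0)) : vec p ≠ 0 := by
  intro h
  apply hp
  have h0 := congrArg (fun x : Eucl 3 => x 0) h
  have h1 := congrArg (fun x : Eucl 3 => x 1) h
  have h2 := congrArg (fun x : Eucl 3 => x 2) h
  simp [vec] at h0 h1 h2
  exact Prod.ext h0 (Prod.ext h1 h2)

theorem vec_inner (p q : Pt) (h : orth p q = true) : ⟪vec p, vec q⟫ = 0 := by
  have h' : p.1 * q.1 + p.2.1 * q.2.1 + p.2.2 * q.2.2 = 0 := by simpa [orth] using h
  have h2 : (p.1 * q.1 + p.2.1 * q.2.1 + p.2.2 * q.2.2 : ℝ) = 0 := by exact_mod_cast h'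
  simp [vec, PiLp.inner_apply, Fin.sum_univ_three]
  linarith

/-- The unit vector in the direction of a nonzero integer vector. -/
def dir (p : Pt) (hp : p ≠ (0, 0, 0)) : Sph 3 :=
  ⟨‖vec p‖⁻¹ • vec p, by
    rw [mem_sphere_zero_iff_norm, norm_smul, norm_inv, norm_norm,
      inv_mul_cancel₀ (norm_ne_zero_iff.2 (vec_ne p hp))]⟩

/-- Integer rays whose rotate by `R⁻¹` lies in `I`. -/
def hits (I : Set (Sph 3)) (R : OG) : Set Pt := {p | ∃ hp : p ≠ (0, 0, 0), act R⁻¹ (dir p hp) ∈ I}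

theorem hits_indep (I : Set (Sph 3)) (hIav : Avoids {0} I) (R : OG) :
    ∀ u ∈ hits I R, ∀ v ∈ hits I R, orth u v = false := by
  rintro u ⟨hu, hu'⟩ v ⟨hv, hv'⟩
  by_contra h
  rw [Bool.not_eq_false] at h
  refine hIav _ hu' _ hv' ?_
  rw [Set.mem_singleton_iff]
  refine (og_inner R⁻¹ _ _).trans ?_
  simp only [dir, inner_smul_left, inner_smul_right, vec_inner u v h, mul_zero]

open Classical in
theorem lintegral_val (I : Set (Sph 3)) (hI : MeasurableSet I) (L : List (Pt × ℕ))
    (hL : ∀ v ∈ L, v.1 ≠ (0, 0, 0)) :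
    ∫⁻ R, (val (hits I R) L : ℝ≥0∞) ∂haarOG = ((L.map Prod.snd).sum : ℕ) * sphMeasure 3 I := by
  induction L with
  | nil => simp [val]
  | cons a t ih =>
    have ih := ih (fun v hv => hL v (List.mem_cons_of_mem _ hv))
    have ha : a.1 ≠ (0, 0, 0) := hL a (by simp)
    have hs : MeasurableSet {R : OG | act R⁻¹ (dir a.1 ha) ∈ I} := measurable_inv_act_left _ hI
    have hmem : ∀ R, a.1 ∈ hits I R ↔ R ∈ {R : OG | act R⁻¹ (dir a.1 ha) ∈ I} := by
      intro R
      exact ⟨fun ⟨_, h⟩ => h, fun h => ⟨ha, h⟩⟩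
    have e : ∀ R, (val (hits I R) (a :: t) : ℝ≥0∞) =
        ({R : OG | act R⁻¹ (dir a.1 ha) ∈ I}.indicator (fun _ => (a.2 : ℝ≥0∞)) R)
          + (val (hits I R) t : ℝ≥0∞) := by
      intro R
      rw [val_cons, Set.indicator_apply]
      simp only [hmem R]
      split_ifs <;> simp
    simp only [e]
    rw [lintegral_add_left (measurable_const.indicator hs), ih, lintegral_indicator_const hs,
      haar_hit I hI, List.map_cons, List.sum_cons, Nat.cast_add, add_mul]

end Witsenhausen

open Witsenhausen in
/-- **Theorem.** Every measurable subset `I` of the unit sphere `S²` in `ℝ³` in which no two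
vectors are orthogonal satisfies `λ(I) < 0.313`; consequently `α(3) < 0.313`. -/
theorem measure_orthogonality_avoiding_lt (I : Set (Sph 3)) (hI : MeasurableSet I)
    (hIav : Avoids {0} I) :
    sphMeasure 3 I < ENNReal.ofReal 0.313 := by
  have h1 := lintegral_val I hI rays.flatten rays_ne
  have h2 : ∫⁻ R, (val (hits I R) rays.flatten : ℝ≥0∞) ∂haarOG ≤ ∫⁻ _, (32 : ℝ≥0∞) ∂haarOG :=
    lintegral_mono (fun R => by
      have h := val_rays _ (hits_indep I hIav R)
      generalize val (hits I R) rays.flatten = m at h ⊢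
      have h' : (m : ℝ≥0∞) ≤ ((32 : ℕ) : ℝ≥0∞) := Nat.cast_le.2 h
      exact h')
  rw [h1, rays_weight, lintegral_const, measure_univ, mul_one] at h2
  have hfin : sphMeasure 3 I ≠ ⊤ := measure_ne_top _ _
  rw [ENNReal.lt_ofReal_iff_toReal_lt hfin]
  have h3 := ENNReal.toReal_mono (by simp) h2
  simp at h3
  norm_num
  linarith
end
end

section
/- Let n ≥ 3 and let X be an arbitrary subset of [-1,1], with topological closure X̄ in [-1,1]. Then α_X(n) = α_{X̄}(n); that is, the supremum of λ(I) over Lebesgue measurable X-avoiding sets I ⊆ S^{n-1} equals the supremum over Lebesgue measurable X̄-avoiding sets. In particular, if 1 ∈ X̄ then α_X(n) = 0. -/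
open MeasureTheory Metric Matrix Filter
open scoped RealInnerProductSpace ENNReal

noncomputable section

/-- The quadratic map `w ↦ |w|² b - 2⟨w,b⟩ w` (`|w|²` times the reflection of `b` in `w^⊥`). -/
def quadRefl {n : ℕ} (b w : Eucl n) : Eucl n := (‖w‖ ^ 2) • b - (2 * ⟪w, b⟫) • w

lemma quadRefl_sub {n : ℕ} (b w v : Eucl n) :
    quadRefl b w - quadRefl b v =
      ⟪w + v, w - v⟫ • b - ⟪w + v, b⟫ • (w - v) - ⟪w - v, b⟫ • (w + v) := by
  have h : ⟪w + v, w - v⟫ = ‖w‖ ^ 2 - ‖v‖ ^ 2 := by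
    rw [inner_add_left, inner_sub_right, inner_sub_right, real_inner_self_eq_norm_sq,
      real_inner_self_eq_norm_sq, real_inner_comm w v]
    ring
  rw [h, inner_add_left, inner_sub_left]
  unfold quadRefl
  module

lemma quadRefl_inner {n : ℕ} (a b w : Eucl n) :
    ⟪quadRefl a w, quadRefl b w⟫ = ‖w‖ ^ 4 * ⟪a, b⟫ := by
  unfold quadRefl
  simp only [inner_sub_left, inner_sub_right, real_inner_smul_left, real_inner_smul_right,
    real_inner_self_eq_norm_sq]
  rw [real_inner_comm w a]
  ring

lemma quadRefl_norm {n : ℕ} (b w : Eucl n) (hb : ‖b‖ = 1) : ‖quadRefl b w‖ = ‖w‖ ^ 2 := by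
  have h := quadRefl_inner b b w
  rw [real_inner_self_eq_norm_sq, real_inner_self_eq_norm_sq, hb] at h
  have : ‖quadRefl b w‖ ^ 2 = (‖w‖ ^ 2) ^ 2 := by rw [h]; ring
  exact (pow_left_inj₀ (norm_nonneg _) (by positivity) two_ne_zero).1 this

lemma quadRefl_invol {n : ℕ} (b w : Eucl n) (hw : ‖w‖ = 1) :
    quadRefl (quadRefl b w) w = b := by
  unfold quadRefl
  simp only [inner_sub_right, real_inner_smul_right, real_inner_self_eq_norm_sq, hw]
  module

lemma quadRefl_inner_left {n : ℕ} (b w : Eucl n) (hw : ‖w‖ = 1) :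
    ⟪w, quadRefl b w⟫ = - ⟪w, b⟫ := by
  unfold quadRefl
  simp only [inner_sub_right, real_inner_smul_right, real_inner_self_eq_norm_sq, hw]
  ring

/-- lower bound for the difference -/
lemma quadRefl_lower {n : ℕ} (b w v : Eucl n) (hb : ‖b‖ = 1) :
    |⟪w + v, b⟫| * ‖w - v‖ ≤ ‖quadRefl b w - quadRefl b v‖ := by
  rw [quadRefl_sub]
  set m := w + v
  set h := w - v
  apply le_of_sq_le_sq _ (norm_nonneg _)
  rw [← real_inner_self_eq_norm_sq (⟪m, h⟫ • b - _ - _)]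
  simp only [inner_sub_left, inner_sub_right, real_inner_smul_left, real_inner_smul_right]
  simp only [real_inner_self_eq_norm_sq, hb]
  rw [real_inner_comm h b, real_inner_comm m b, real_inner_comm m h, mul_pow, sq_abs]
  have hc : ⟪b, m⟫ ^ 2 ≤ ‖m‖ ^ 2 := by
    have := abs_real_inner_le_norm b m
    rw [hb, one_mul] at this
    exact sq_le_sq.2 (by rwa [abs_of_nonneg (norm_nonneg m)])
  rw [real_inner_comm b m, real_inner_comm b h]
  have h2 := mul_le_mul_of_nonneg_left hc (sq_nonneg ⟪b, h⟫)
  nlinarith [sq_nonneg (⟪m, h⟫ - ⟪b, m⟫ * ⟪b, h⟫)]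

/-- upper bound for the difference -/
lemma quadRefl_upper {n : ℕ} (b w v : Eucl n) (hb : ‖b‖ = 1) :
    ‖quadRefl b w - quadRefl b v‖ ≤ 3 * ‖w + v‖ * ‖w - v‖ := by
  rw [quadRefl_sub]
  set m := w + v
  set h := w - v
  have h1 : ‖⟪m, h⟫ • b‖ ≤ ‖m‖ * ‖h‖ := by
    rw [norm_smul, hb, mul_one]; exact norm_inner_le_norm m h
  have h2 : ‖⟪m, b⟫ • h‖ ≤ ‖m‖ * ‖h‖ := by
    rw [norm_smul]
    have := norm_inner_le_norm (𝕜 := ℝ) m b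
    rw [hb, mul_one] at this
    gcongr
  have h3 : ‖⟪h, b⟫ • m‖ ≤ ‖m‖ * ‖h‖ := by
    rw [norm_smul, mul_comm]
    have := norm_inner_le_norm (𝕜 := ℝ) h b
    rw [hb, mul_one] at this
    gcongr
  have h4 := norm_sub_le (⟪m, h⟫ • b - ⟪m, b⟫ • h) (⟪h, b⟫ • m)
  have h5 := norm_sub_le (⟪m, h⟫ • b) (⟪m, b⟫ • h)
  linarith

lemma quadRefl_upper' {n : ℕ} (b b' w : Eucl n) (hw : ‖w‖ = 1) :
    ‖quadRefl b' w - quadRefl b w‖ ≤ 3 * ‖b' - b‖ := by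
  have : quadRefl b' w - quadRefl b w = (b' - b) - (2 * ⟪w, b' - b⟫) • w := by
    unfold quadRefl
    rw [inner_sub_right, hw]
    module
  rw [this]
  have h1 := norm_sub_le (b' - b) ((2 * ⟪w, b' - b⟫) • w)
  have h2 : ‖(2 * ⟪w, b' - b⟫) • w‖ ≤ 2 * ‖b' - b‖ := by
    rw [norm_smul, hw, mul_one, norm_mul, Real.norm_ofNat]
    have := norm_inner_le_norm (𝕜 := ℝ) w (b' - b)
    rw [hw, one_mul] at this
    gcongr
  linarith

lemma volume_le_of_expanding {n : ℕ} {N : Set (Eucl n)} {f : Eucl n → Eucl n} {k : ℝ}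
    (hk : 0 < k) (h : ∀ x ∈ N, ∀ y ∈ N, k * ‖x - y‖ ≤ ‖f x - f y‖) :
    volume N ≤ ENNReal.ofReal (k⁻¹) ^ n * volume (f '' N) := by
  have hinj : Set.InjOn f N := by
    intro x hx y hy hxy
    have := h x hx y hy
    rw [hxy, sub_self, norm_zero] at this
    have h0 : ‖x - y‖ ≤ 0 := by
      by_contra hh
      push Not at hh
      nlinarith [mul_pos hk hh]
    exact sub_eq_zero.1 (norm_le_zero_iff.1 h0)
  have hL : LipschitzOnWith (Real.toNNReal k⁻¹) (Function.invFunOn f N) (f '' N) := by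
    apply LipschitzOnWith.of_dist_le_mul
    rintro _ ⟨x, hx, rfl⟩ _ ⟨y, hy, rfl⟩
    rw [hinj.leftInvOn_invFunOn hx, hinj.leftInvOn_invFunOn hy, dist_eq_norm, dist_eq_norm,
      Real.coe_toNNReal _ (inv_pos.2 hk).le]
    have := h x hx y hy
    rw [inv_mul_eq_div, le_div_iff₀ hk]
    linarith
  have him : Function.invFunOn f N '' (f '' N) = N := hinj.leftInvOn_invFunOn.image_image
  have hH := hL.hausdorffMeasure_image_le (d := (Module.finrank ℝ (Eucl n) : ℝ)) (by positivity)
  rw [him, finrank_euclideanSpace_fin, ENNReal.rpow_natCast] at hH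
  have hinst : Measure.IsAddHaarMeasure (μH[(n : ℝ)] : Measure (Eucl n)) := by
    simpa using MeasureTheory.isAddHaarMeasure_hausdorffMeasure (E := Eucl n)
  have hv := Measure.isAddLeftInvariant_eq_smul (volume : Measure (Eucl n)) μH[(n : ℝ)]
  rw [hv]
  simp only [Measure.smul_apply, ENNReal.smul_def, smul_eq_mul]
  calc _ ≤ _ * (_ * _) := mul_le_mul_right hH _
    _ = _ := by rw [mul_left_comm]; rfl

lemma bad_small {n : ℕ} {C : Set (Eucl n)} {b w₀ : Eucl n} {c : ℝ} (hc : 0 < c)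
    (hb : ‖b‖ = 1) (hw : ‖w₀‖ = 1) (hwb : ⟪w₀, b⟫ ≠ 0)
    (hd : Tendsto (fun r => volume (Cᶜ ∩ closedBall (c • quadRefl b w₀) r) /
      volume (closedBall (c • quadRefl b w₀) r)) (nhdsWithin 0 (Set.Ioi 0)) (nhds 0)) :
    ∀ᶠ r in nhdsWithin (0 : ℝ) (Set.Ioi 0), ∀ b' : Eucl n, ‖b'‖ = 1 → ‖b' - b‖ ≤ r →
      volume {w | w ∈ closedBall w₀ r ∧ c • quadRefl b' w ∉ C} <
        volume (closedBall w₀ r) / 2 := by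
  set x := c • quadRefl b w₀
  set β := |⟪w₀, b⟫| with hβ
  have hβ0 : 0 < β := abs_pos.2 hwb
  set K : ENNReal := ENNReal.ofReal ((c * β)⁻¹) ^ n * ENNReal.ofReal ((12 * c) ^ n)
  have hK : K ≠ ⊤ := ENNReal.mul_ne_top (ENNReal.pow_ne_top ENNReal.ofReal_ne_top)
    ENNReal.ofReal_ne_top
  have hscale : Tendsto (fun r : ℝ => 12 * c * r) (nhdsWithin 0 (Set.Ioi 0))
      (nhdsWithin 0 (Set.Ioi 0)) := by
    apply tendsto_nhdsWithin_of_tendsto_nhds_of_eventually_within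
    · have : Tendsto (fun r : ℝ => 12 * c * r) (nhds 0) (nhds (12 * c * 0)) :=
        (continuous_const.mul continuous_id).tendsto 0
      rw [mul_zero] at this
      exact this.mono_left nhdsWithin_le_nhds
    · filter_upwards [self_mem_nhdsWithin] with r hr
      exact mul_pos (mul_pos (by norm_num) hc) hr
  have h1 := ENNReal.Tendsto.const_mul (a := K) (hd.comp hscale) (Or.inr hK)
  rw [mul_zero] at h1
  have h2 := h1.eventually (gt_mem_nhds (show (0 : ENNReal) < 1 / 2 by simp))
  have hr1 : ∀ᶠ r in nhdsWithin (0 : ℝ) (Set.Ioi 0), r < min 1 (β / 6) :=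
    nhdsWithin_le_nhds (gt_mem_nhds (show (0 : ℝ) < min 1 (β / 6) by positivity))
  filter_upwards [h2, hr1, self_mem_nhdsWithin] with r hr hr1 hr0 b' hb' hbb
  replace hr0 : 0 < r := hr0
  have hr1' : r < 1 := lt_of_lt_of_le hr1 (min_le_left _ _)
  have hr2 : r < β / 6 := lt_of_lt_of_le hr1 (min_le_right _ _)
  set N := {w | w ∈ closedBall w₀ r ∧ c • quadRefl b' w ∉ C}
  have hexp : ∀ u ∈ N, ∀ v ∈ N, (c * β) * ‖u - v‖ ≤ ‖c • quadRefl b' u - c • quadRefl b' v‖ := by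
    rintro u ⟨hu, -⟩ v ⟨hv, -⟩
    rw [mem_closedBall, dist_eq_norm] at hu hv
    rw [← smul_sub, norm_smul, Real.norm_of_nonneg hc.le, mul_assoc]
    refine mul_le_mul_of_nonneg_left (le_trans ?_ (quadRefl_lower b' u v hb')) hc.le
    refine mul_le_mul_of_nonneg_right ?_ (norm_nonneg _)
    have e : (2 : ℝ) * ⟪w₀, b⟫ = ⟪u + v, b'⟫ - ⟪u - w₀, b'⟫ - ⟪v - w₀, b'⟫ - 2 * ⟪w₀, b' - b⟫ := by
      simp only [inner_add_left, inner_sub_left, inner_sub_right]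
      ring
    have e1 := abs_real_inner_le_norm (u - w₀) b'
    have e2 := abs_real_inner_le_norm (v - w₀) b'
    have e3 := abs_real_inner_le_norm w₀ (b' - b)
    rw [hb', mul_one] at e1 e2
    rw [hw, one_mul] at e3
    have e4 : 2 * β = |(2 : ℝ) * ⟪w₀, b⟫| := by rw [abs_mul, abs_two]
    have e5 : |(2 : ℝ) * ⟪w₀, b⟫| ≤ |⟪u + v, b'⟫| + |⟪u - w₀, b'⟫| + |⟪v - w₀, b'⟫|
        + 2 * |⟪w₀, b' - b⟫| := by
      rw [e]
      have := abs_sub (⟪u + v, b'⟫ - ⟪u - w₀, b'⟫ - ⟪v - w₀, b'⟫) (2 * ⟪w₀, b' - b⟫)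
      have := abs_sub (⟪u + v, b'⟫ - ⟪u - w₀, b'⟫) (⟪v - w₀, b'⟫)
      have := abs_sub (⟪u + v, b'⟫) (⟪u - w₀, b'⟫)
      have := abs_mul (2 : ℝ) (⟪w₀, b' - b⟫)
      rw [abs_two] at this
      linarith
    linarith
  have himg : (fun w => c • quadRefl b' w) '' N ⊆ Cᶜ ∩ closedBall x (12 * c * r) := by
    rintro _ ⟨u, ⟨hu, huC⟩, rfl⟩
    refine ⟨huC, ?_⟩
    rw [mem_closedBall, dist_eq_norm] at hu ⊢
    simp only [x]
    rw [← smul_sub, norm_smul, Real.norm_of_nonneg hc.le]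
    have e1 := quadRefl_upper b' u w₀ hb'
    have e2 := quadRefl_upper' b b' w₀ hw
    have e3 : ‖quadRefl b' u - quadRefl b w₀‖ ≤ ‖quadRefl b' u - quadRefl b' w₀‖ +
      ‖quadRefl b' w₀ - quadRefl b w₀‖ := norm_sub_le_norm_sub_add_norm_sub _ _ _
    have e4 : ‖u + w₀‖ ≤ 3 := by
      have : u + w₀ = (u - w₀) + (2 : ℝ) • w₀ := by module
      rw [this]
      refine (norm_add_le _ _).trans ?_
      rw [norm_smul, hw, Real.norm_ofNat]
      linarith
    have e5 : ‖u + w₀‖ * ‖u - w₀‖ ≤ 3 * r :=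
      mul_le_mul e4 hu (norm_nonneg _) (by norm_num)
    have : ‖quadRefl b' u - quadRefl b w₀‖ ≤ 12 * r := by nlinarith
    nlinarith
  have hvol := (volume_le_of_expanding (mul_pos hc hβ0) hexp).trans
    (mul_le_mul_right (measure_mono himg) _)
  have hball : volume (closedBall x (12 * c * r)) =
      ENNReal.ofReal ((12 * c) ^ n) * volume (closedBall w₀ r) := by
    rw [Measure.addHaar_closedBall_mul _ _ (by positivity) hr0.le, finrank_euclideanSpace_fin,
      Measure.addHaar_closedBall_center, Measure.addHaar_closedBall_center _ w₀]
  have hp : volume (closedBall w₀ r) ≠ 0 := (measure_closedBall_pos _ _ hr0).ne'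
  have ht : volume (closedBall w₀ r) ≠ ⊤ := measure_closedBall_lt_top.ne
  have hp' : volume (closedBall x (12 * c * r)) ≠ 0 :=
    (measure_closedBall_pos _ _ (by positivity)).ne'
  have ht' : volume (closedBall x (12 * c * r)) ≠ ⊤ := measure_closedBall_lt_top.ne
  refine hvol.trans_lt ?_
  simp only [Function.comp] at hr
  calc _ = ENNReal.ofReal ((c * β)⁻¹) ^ n *
        ((volume (Cᶜ ∩ closedBall x (12 * c * r)) / volume (closedBall x (12 * c * r))) *
          volume (closedBall x (12 * c * r))) := by
        rw [ENNReal.div_mul_cancel hp' ht']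
    _ = K * (volume (Cᶜ ∩ closedBall x (12 * c * r)) / volume (closedBall x (12 * c * r))) *
          volume (closedBall w₀ r) := by
        conv_lhs => rw [hball]
        rw [hball]; simp only [K]; ring
    _ < 1 / 2 * volume (closedBall w₀ r) := ENNReal.mul_lt_mul_left hp ht hr
    _ = _ := by rw [one_div, mul_comm, ENNReal.div_eq_inv_mul, mul_comm]

lemma exists_near {n : ℕ} (hn : 3 ≤ n) (a b : Eucl n) (ha : ‖a‖ = 1) (hb : ‖b‖ = 1) {ε : ℝ}
    (hε : 0 < ε) : ∃ δ > 0, ∀ t ∈ Set.Icc (-1 : ℝ) 1, |t - ⟪a, b⟫| < δ →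
      ∃ b' : Eucl n, ‖b'‖ = 1 ∧ ⟪a, b'⟫ = t ∧ ‖b' - b‖ ≤ ε := by
  obtain ⟨v, hv, hav, hbv⟩ : ∃ v : Eucl n, ‖v‖ = 1 ∧ ⟪a, v⟫ = 0 ∧
      b = ⟪a, b⟫ • a + √(1 - ⟪a, b⟫ ^ 2) • v := by
    set u := b - ⟪a, b⟫ • a with hu
    have hau : ⟪a, u⟫ = 0 := by
      rw [hu, inner_sub_right, real_inner_smul_right, real_inner_self_eq_norm_sq, ha]; ring
    have hun : ‖u‖ ^ 2 = 1 - ⟪a, b⟫ ^ 2 := by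
      rw [← real_inner_self_eq_norm_sq, hu]
      simp only [inner_sub_left, inner_sub_right, real_inner_smul_left, real_inner_smul_right]
      rw [real_inner_self_eq_norm_sq, real_inner_self_eq_norm_sq, ha, hb, real_inner_comm a b]
      ring
    rw [← hun, Real.sqrt_sq (norm_nonneg _)]
    by_cases h0 : u = 0
    · have hdim : 0 < Module.finrank ℝ (Submodule.span ℝ {a})ᗮ := by
        have h1 := Submodule.finrank_add_finrank_orthogonal (Submodule.span ℝ {a})
        have h2 := finrank_span_singleton (K := ℝ) (v := a) (by
          intro h; rw [h, norm_zero] at ha; norm_num at ha)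
        rw [finrank_euclideanSpace_fin] at h1
        omega
      obtain ⟨⟨z, hz⟩, hz0⟩ := (Module.finrank_pos_iff_exists_ne_zero (R := ℝ)).1 hdim
      have hz1 : z ≠ 0 := fun h => hz0 (Subtype.ext h)
      rw [Submodule.mem_orthogonal_singleton_iff_inner_right] at hz
      refine ⟨‖z‖⁻¹ • z, norm_smul_inv_norm hz1, ?_, ?_⟩
      · rw [real_inner_smul_right, hz, mul_zero]
      · rw [h0, norm_zero, zero_smul, add_zero]
        exact sub_eq_zero.1 (hu ▸ h0)
    · refine ⟨‖u‖⁻¹ • u, norm_smul_inv_norm h0, ?_, ?_⟩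
      · rw [real_inner_smul_right, hau, mul_zero]
      · rw [smul_smul, mul_inv_cancel₀ (norm_ne_zero_iff.2 h0), one_smul, hu]
        abel
  have hcont : Continuous (fun t : ℝ => t • a + √(1 - t ^ 2) • v) := by fun_prop
  obtain ⟨δ, hδ, h⟩ := Metric.continuous_iff.1 hcont ⟪a, b⟫ ε hε
  refine ⟨δ, hδ, fun t ht htd => ⟨t • a + √(1 - t ^ 2) • v, ?_, ?_, ?_⟩⟩
  · have h1 : 0 ≤ 1 - t ^ 2 := by nlinarith [ht.1, ht.2]
    have : ‖t • a + √(1 - t ^ 2) • v‖ ^ 2 = 1 := by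
      rw [← real_inner_self_eq_norm_sq]
      simp only [inner_add_left, inner_add_right, real_inner_smul_left, real_inner_smul_right]
      rw [real_inner_self_eq_norm_sq, real_inner_self_eq_norm_sq, ha, hv, real_inner_comm a v, hav]
      nlinarith [Real.mul_self_sqrt h1]
    exact (pow_eq_one_iff_of_nonneg (norm_nonneg _) two_ne_zero).1 this
  · rw [inner_add_right, real_inner_smul_right, real_inner_smul_right, hav,
      real_inner_self_eq_norm_sq, ha]
    ring
  · have := h t (by rwa [Real.dist_eq])
    rw [dist_eq_norm, ← hbv] at this
    exact this.le

/-- Density of the cone at `x`. -/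
def DensAt {n : ℕ} (C : Set (Eucl n)) (x : Eucl n) : Prop :=
  Tendsto (fun r => volume (Cᶜ ∩ closedBall x r) / volume (closedBall x r))
    (nhdsWithin 0 (Set.Ioi 0)) (nhds 0)

/-- The cone over `I`. -/
def coneOver {n : ℕ} (I : Set (Sph n)) : Set (Eucl n) :=
  {x | ‖x‖⁻¹ • x ∈ ((↑) : Sph n → Eucl n) '' I}

lemma coneOver_meas {n : ℕ} {I : Set (Sph n)} (hI : MeasurableSet I) :
    MeasurableSet (coneOver I) := by
  have h1 : MeasurableSet (((↑) : Sph n → Eucl n) '' I) :=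
    (MeasurableEmbedding.subtype_coe isClosed_sphere.measurableSet).measurableSet_image.2 hI
  have h2 : Measurable (fun x : Eucl n => ‖x‖⁻¹ • x) := by fun_prop
  exact h2 h1

lemma exists_axis {n : ℕ} (x y : Eucl n) (hx : ‖x‖ = 1) (hy : ‖y‖ = 1) :
    ∃ w : Eucl n, ‖w‖ = 1 ∧ ⟪w, x⟫ ≠ 0 ∧ ⟪w, y⟫ ≠ 0 := by
  by_cases h : ⟪x, y⟫ = 0
  · have h1 : ⟪x + y, x⟫ = 1 := by
      rw [inner_add_left, real_inner_comm, real_inner_comm x y, h, real_inner_self_eq_norm_sq, hx]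
      norm_num
    have h2 : ⟪x + y, y⟫ = 1 := by
      rw [inner_add_left, h, real_inner_self_eq_norm_sq, hy]
      norm_num
    have h0 : x + y ≠ 0 := by
      intro h0; rw [h0, inner_zero_left] at h1; norm_num at h1
    refine ⟨‖x + y‖⁻¹ • (x + y), norm_smul_inv_norm h0, ?_, ?_⟩
    · rw [real_inner_smul_left, h1, mul_one]; exact inv_ne_zero (norm_ne_zero_iff.2 h0)
    · rw [real_inner_smul_left, h2, mul_one]; exact inv_ne_zero (norm_ne_zero_iff.2 h0)
  · exact ⟨x, hx, by rw [real_inner_self_eq_norm_sq, hx]; norm_num, h⟩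

lemma dens_avoids {n : ℕ} (hn : 3 ≤ n) {X : Set ℝ} (hX : X ⊆ Set.Icc (-1 : ℝ) 1)
    {I : Set (Sph n)} (hI : Avoids X I) (ξ η : Sph n) {c d : ℝ} (hc : 0 < c) (hd : 0 < d)
    (h1 : DensAt (coneOver I) (c • (ξ : Eucl n))) (h2 : DensAt (coneOver I) (d • (η : Eucl n))) :
    ⟪(ξ : Eucl n), (η : Eucl n)⟫ ∉ closure X := by
  intro hmem
  have hξ : ‖(ξ : Eucl n)‖ = 1 := norm_eq_of_mem_sphere ξ
  have hη : ‖(η : Eucl n)‖ = 1 := norm_eq_of_mem_sphere η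
  obtain ⟨w₀, hw, hwx, hwy⟩ := exists_axis (ξ : Eucl n) η hξ hη
  set a := quadRefl (ξ : Eucl n) w₀ with ha
  set b := quadRefl (η : Eucl n) w₀ with hb
  have han : ‖a‖ = 1 := by rw [ha, quadRefl_norm _ _ hξ, hw]; norm_num
  have hbn : ‖b‖ = 1 := by rw [hb, quadRefl_norm _ _ hη, hw]; norm_num
  have hab : ⟪a, b⟫ = ⟪(ξ : Eucl n), (η : Eucl n)⟫ := by
    rw [ha, hb, quadRefl_inner, hw]; norm_num
  have hwa : ⟪w₀, a⟫ ≠ 0 := by rw [ha, quadRefl_inner_left _ _ hw]; exact neg_ne_zero.2 hwx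
  have hwb : ⟪w₀, b⟫ ≠ 0 := by rw [hb, quadRefl_inner_left _ _ hw]; exact neg_ne_zero.2 hwy
  have hA := bad_small (C := coneOver I) hc han hw hwa
    (by rw [ha, quadRefl_invol _ _ hw]; exact h1)
  have hB := bad_small (C := coneOver I) hd hbn hw hwb
    (by rw [hb, quadRefl_invol _ _ hw]; exact h2)
  have hs : ∀ᶠ r in nhdsWithin (0 : ℝ) (Set.Ioi 0), r < 1 :=
    nhdsWithin_le_nhds (gt_mem_nhds one_pos)
  obtain ⟨r, hrA, hrB, hr1, hr0⟩ :=
    (hA.and (hB.and (hs.and (self_mem_nhdsWithin : Set.Ioi (0 : ℝ) ∈ _)))).exists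
  obtain ⟨δ, hδ, hnear⟩ := exists_near hn a b han hbn hr0
  obtain ⟨t, htX, ht⟩ := Metric.mem_closure_iff.1 hmem δ hδ
  obtain ⟨b', hb'n, hab', hbb'⟩ := hnear t (hX htX) (by
    rw [hab, abs_sub_comm]; rwa [Real.dist_eq] at ht)
  have hA' := hrA a han (by rw [sub_self, norm_zero]; exact le_of_lt hr0)
  have hB' := hrB b' hb'n hbb'
  obtain ⟨w, hwball, hwA, hwB⟩ : ∃ w ∈ closedBall w₀ r, c • quadRefl a w ∈ coneOver I ∧
      d • quadRefl b' w ∈ coneOver I := by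
    by_contra hcon
    push Not at hcon
    have hsub : closedBall w₀ r ⊆ {w | w ∈ closedBall w₀ r ∧ c • quadRefl a w ∉ coneOver I} ∪
        {w | w ∈ closedBall w₀ r ∧ d • quadRefl b' w ∉ coneOver I} := by
      intro w hwm
      by_cases hh : c • quadRefl a w ∈ coneOver I
      · exact Or.inr ⟨hwm, hcon w hwm hh⟩
      · exact Or.inl ⟨hwm, hh⟩
    have := ((measure_mono hsub).trans (measure_union_le _ _)).trans_lt (ENNReal.add_lt_add hA' hB')
    rw [ENNReal.add_halves] at this
    exact lt_irrefl _ this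
  have hw0 : 0 < ‖w‖ := by
    rw [mem_closedBall, dist_eq_norm, norm_sub_rev] at hwball
    have := norm_sub_norm_le w₀ w
    linarith
  obtain ⟨p, hp, hpe⟩ := hwA
  obtain ⟨q, hq, hqe⟩ := hwB
  apply hI p hp q hq
  have : ⟪(p : Eucl n), (q : Eucl n)⟫ = t := by
    rw [hpe, hqe, real_inner_smul_left, real_inner_smul_right, real_inner_smul_left,
      real_inner_smul_right, quadRefl_inner, norm_smul, norm_smul, quadRefl_norm _ _ han,
      quadRefl_norm _ _ hb'n, hab', Real.norm_of_nonneg hc.le, Real.norm_of_nonneg hd.le]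
    field_simp
  rwa [this]

lemma ae_dens {n : ℕ} (hn : 3 ≤ n) {I : Set (Sph n)} (hI : MeasurableSet I) :
    ∀ᵐ ξ ∂(volume : Measure (Eucl n)).toSphere, ξ ∈ I →
      ∃ c : ℝ, 0 < c ∧ DensAt (coneOver I) (c • (ξ : Eucl n)) := by
  have h := Besicovitch.ae_tendsto_measure_inter_div_of_measurableSet
    (volume : Measure (Eucl n)) (coneOver_meas hI).compl
  have h1 : ∀ᵐ x ∂(volume : Measure (Eucl n)), x ∈ coneOver I → DensAt (coneOver I) x := by
    filter_upwards [h] with x hx hxC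
    have : (coneOver I)ᶜ.indicator (1 : Eucl n → ENNReal) x = 0 :=
      Set.indicator_of_notMem (by simpa using hxC) _
    rw [this] at hx
    exact hx
  have hmp := (volume : Measure (Eucl n)).measurePreserving_homeomorphUnitSphereProd
  have h2 : ∀ᵐ (x : ({0}ᶜ : Set (Eucl n))) ∂((volume : Measure (Eucl n)).comap ((↑) : ({0}ᶜ : Set (Eucl n)) → Eucl n)),
      (x : Eucl n) ∈ coneOver I → DensAt (coneOver I) (x : Eucl n) := by
    have hms : MeasurableSet ({0}ᶜ : Set (Eucl n)) := (measurableSet_singleton _).compl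
    have hr := ae_restrict_of_ae (s := ({0}ᶜ : Set (Eucl n))) h1
    rw [← map_comap_subtype_coe hms] at hr
    exact ae_of_ae_map measurable_subtype_coe.aemeasurable hr
  have h3 : ∀ᵐ p ∂((volume : Measure (Eucl n)).toSphere.prod
      (Measure.volumeIoiPow (Module.finrank ℝ (Eucl n) - 1))),
      (p.2 : ℝ) • (p.1 : Eucl n) ∈ coneOver I → DensAt (coneOver I) ((p.2 : ℝ) • (p.1 : Eucl n)) := by
    have hms := hmp.symm (homeomorphUnitSphereProd (Eucl n)).toMeasurableEquiv
    have := hms.quasiMeasurePreserving.ae h2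
    filter_upwards [this] with p hp
    exact hp
  have h4 := Measure.ae_ae_of_ae_prod h3
  have hne : (ae (Measure.volumeIoiPow (Module.finrank ℝ (Eucl n) - 1))).NeBot := by
    rw [ae_neBot]
    intro h0
    have := Measure.volumeIoiPow_apply_Iio (Module.finrank ℝ (Eucl n) - 1) ⟨1, Set.mem_Ioi.2 one_pos⟩
    rw [h0, Measure.coe_zero, Pi.zero_apply, eq_comm, ENNReal.ofReal_eq_zero] at this
    have h' : (0 : ℝ) < 1 ^ (Module.finrank ℝ (Eucl n) - 1 + 1) /
      (((Module.finrank ℝ (Eucl n) - 1 : ℕ) : ℝ) + 1) := by positivity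
    exact absurd this (not_le.2 h')
  filter_upwards [h4] with ξ hξ hξI
  obtain ⟨c, hc⟩ := hξ.exists
  have hc0 : (0 : ℝ) < c := c.2
  refine ⟨c, hc0, hc ?_⟩
  refine ⟨ξ, hξI, ?_⟩
  have hξn : ‖(ξ : Eucl n)‖ = 1 := norm_eq_of_mem_sphere ξ
  rw [norm_smul, hξn, mul_one, Real.norm_of_nonneg hc0.le, smul_smul,
    inv_mul_cancel₀ hc0.ne', one_smul]

lemma exists_closure_avoiding {n : ℕ} (hn : 3 ≤ n) {X : Set ℝ} (hX : X ⊆ Set.Icc (-1 : ℝ) 1)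
    {I : Set (Sph n)} (hm : MeasurableSet I) (hI : Avoids X I) :
    ∃ J : Set (Sph n), MeasurableSet J ∧ Avoids (closure X) J ∧
      sphMeasure n I ≤ sphMeasure n J := by
  have h := ae_dens hn hm
  set μ := (volume : Measure (Eucl n)).toSphere
  rw [ae_iff] at h
  set B := toMeasurable μ {ξ | ¬ (ξ ∈ I → ∃ c : ℝ, 0 < c ∧ DensAt (coneOver I) (c • (ξ : Eucl n)))}
  have hB : μ B = 0 := by rw [measure_toMeasurable]; exact h
  have hgood : ∀ ξ ∈ I \ B, ∃ c : ℝ, 0 < c ∧ DensAt (coneOver I) (c • (ξ : Eucl n)) := by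
    intro ξ hξ
    by_contra hcon
    exact hξ.2 (subset_toMeasurable _ _ (fun hh => hcon (hh hξ.1)))
  refine ⟨I \ B, hm.diff (measurableSet_toMeasurable _ _), ?_, ?_⟩
  · intro ξ hξ η hη
    obtain ⟨c, hc, h1⟩ := hgood ξ hξ
    obtain ⟨d, hd, h2⟩ := hgood η hη
    exact dens_avoids hn hX hI ξ η hc hd h1 h2
  · unfold sphMeasure
    rw [Measure.smul_apply, Measure.smul_apply, measure_sdiff_null hB]


/-- **Theorem (invariance under closure).** Let `n ≥ 3` and let `X ⊆ [-1,1]` with closure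
`X̄`. Then `α_X(n) = α_{X̄}(n)`: the supremum of the measures of measurable `X`-avoiding
subsets of `S^{n-1}` equals the supremum over `X̄`-avoiding ones. In particular, if
`1 ∈ X̄` then `α_X(n) = 0`. -/
theorem avoiding_sup_closure {n : ℕ} (hn : 3 ≤ n) (X : Set ℝ)
    (hX : X ⊆ Set.Icc (-1 : ℝ) 1) :
    (⨆ (I : Set (Sph n)) (_ : MeasurableSet I ∧ Avoids X I), sphMeasure n I) =
      (⨆ (I : Set (Sph n)) (_ : MeasurableSet I ∧ Avoids (closure X) I), sphMeasure n I) ∧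
    ((1 : ℝ) ∈ closure X →
      (⨆ (I : Set (Sph n)) (_ : MeasurableSet I ∧ Avoids X I), sphMeasure n I) = 0) := by
  have heq : (⨆ (I : Set (Sph n)) (_ : MeasurableSet I ∧ Avoids X I), sphMeasure n I) =
      (⨆ (I : Set (Sph n)) (_ : MeasurableSet I ∧ Avoids (closure X) I), sphMeasure n I) := by
    apply le_antisymm
    · refine iSup₂_le fun I hI => ?_
      obtain ⟨J, hJm, hJ, hle⟩ := exists_closure_avoiding hn hX hI.1 hI.2
      exact hle.trans (le_iSup₂_of_le J ⟨hJm, hJ⟩ le_rfl)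
    · refine iSup₂_le fun I hI => ?_
      exact le_iSup₂_of_le I ⟨hI.1, fun ξ hξ η hη hmem =>
        hI.2 ξ hξ η hη (subset_closure hmem)⟩ le_rfl
  refine ⟨heq, fun h1 => ?_⟩
  rw [heq, ← nonpos_iff_eq_zero]
  refine iSup₂_le fun I hI => ?_
  have : I = ∅ := by
    rw [Set.eq_empty_iff_forall_notMem]
    intro ξ hξ
    apply hI.2 ξ hξ ξ hξ
    rw [real_inner_self_eq_norm_sq, norm_eq_of_mem_sphere ξ]
    simpa using h1
  rw [this, measure_empty]
end
end
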